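/- arXiv:1703.10646 — 2 statements merged into one kernel-verified Lean document; each statement's English description precedes it below -/
import Mathlib

section
/- The ℤ-span in ℂ² of {e₁, λ₁+e₂, λ₂+e₂, 2e₂} = {(1,0), (ζ,1), (0,1+ζ), (0,2)} equals the ℤ-span of {(1,0), (2ζ,0), (ζ,1), (ζ²,ζ)}; that is, Λ_A = Γ_{2ζ}·(1,0) ⊕ Γ_ζ·(ζ,1), where Γ_{2ζ} = ℤ + ℤ·2ζ and Γ_ζ = ℤ + ℤζ. In particular A = ℂ²/Λ_A is isomorphic to the product of elliptic curves E'' × E' with E'' = ℂ/Γ_{2ζ} and E' = ℂ/Γ_ζ. -/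
noncomputable section

/-- ζ = (1 + √3·i)/2, a primitive sixth root of unity. -/
def ζ : ℂ := (1 + (Real.sqrt 3 : ℂ) * Complex.I) / 2

/-- The lattice Λ_A = ℤ𝐞₁ ⊕ ℤ𝐞₂ ⊕ ℤ𝐞₃ ⊕ ℤ𝐞₄ with
𝐞₁ = (1,0), 𝐞₂ = (ζ,1), 𝐞₃ = (0,1+ζ), 𝐞₄ = (0,2). -/
def ΛA : Set (ℂ × ℂ) :=
  {v | ∃ a b c d : ℤ, v = (a : ℂ) • ((1 : ℂ), (0 : ℂ)) + (b : ℂ) • (ζ, (1 : ℂ))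
    + (c : ℂ) • ((0 : ℂ), 1 + ζ) + (d : ℂ) • ((0 : ℂ), (2 : ℂ))}

/-- Γ_{2ζ} = ℤ + ℤ·2ζ ⊂ ℂ. -/
def Γ2ζ : Set ℂ := {z | ∃ a b : ℤ, z = (a : ℂ) + (b : ℂ) * (2 * ζ)}

/-- Γ_ζ = ℤ + ℤ·ζ ⊂ ℂ. -/
def Γζ : Set ℂ := {z | ∃ a b : ℤ, z = (a : ℂ) + (b : ℂ) * ζ}

theorem zeta_sq : ζ ^ 2 = ζ - 1 := by
  have h3 : (Real.sqrt 3 : ℂ) ^ 2 = 3 := by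
    rw [← Complex.ofReal_pow, Real.sq_sqrt (by norm_num)]
    norm_num
  unfold ζ
  linear_combination (Complex.I ^ 2 / 4) * h3 + (3 / 4) * Complex.I_sq

theorem span_eq : ΛA = {v | ∃ a b c d : ℤ, v = (a : ℂ) • ((1 : ℂ), (0 : ℂ))
        + (b : ℂ) • (2 * ζ, (0 : ℂ)) + (c : ℂ) • (ζ, (1 : ℂ))
        + (d : ℂ) • (ζ ^ 2, ζ)} := by
  ext ⟨x, y⟩
  simp only [ΛA, Set.mem_setOf_eq, Prod.smul_mk, Prod.mk_add_mk, Prod.mk.injEq, smul_eq_mul]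
  constructor
  · rintro ⟨a, b, c, d, h1, h2⟩
    refine ⟨a + c, -d - c, b + 2 * d + c, c, ?_, ?_⟩
    · push_cast
      linear_combination h1 - c * zeta_sq
    · push_cast
      linear_combination h2
  · rintro ⟨a, b, c, d, h1, h2⟩
    refine ⟨a - d, 2 * b + c + d, d, -b - d, ?_, ?_⟩
    · push_cast
      linear_combination h1 + d * zeta_sq
    · push_cast
      linear_combination h2

/-- Λ_A equals the ℤ-span of {(1,0),(2ζ,0),(ζ,1),(ζ²,ζ)}, i.e.
Λ_A = Γ_{2ζ}·(1,0) ⊕ Γ_ζ·(ζ,1) (the sum being direct). -/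
theorem stmt7 :
    (ΛA = {v | ∃ a b c d : ℤ, v = (a : ℂ) • ((1 : ℂ), (0 : ℂ))
        + (b : ℂ) • (2 * ζ, (0 : ℂ)) + (c : ℂ) • (ζ, (1 : ℂ))
        + (d : ℂ) • (ζ ^ 2, ζ)}) ∧
    (ΛA = {v | ∃ γ ∈ Γ2ζ, ∃ δ ∈ Γζ, v = γ • ((1 : ℂ), (0 : ℂ)) + δ • (ζ, (1 : ℂ))}) ∧
    (∀ γ ∈ Γ2ζ, ∀ γ' ∈ Γ2ζ, ∀ δ ∈ Γζ, ∀ δ' ∈ Γζ,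
      γ • ((1 : ℂ), (0 : ℂ)) + δ • (ζ, (1 : ℂ))
        = γ' • ((1 : ℂ), (0 : ℂ)) + δ' • (ζ, (1 : ℂ)) → γ = γ' ∧ δ = δ') := by
  refine ⟨span_eq, ?_, ?_⟩
  · rw [span_eq]
    ext ⟨x, y⟩
    simp only [Γ2ζ, Γζ, Set.mem_setOf_eq, Prod.smul_mk, Prod.mk_add_mk, Prod.mk.injEq,
      smul_eq_mul]
    constructor
    · rintro ⟨a, b, c, d, h1, h2⟩
      refine ⟨_, ⟨a, b, rfl⟩, _, ⟨c, d, rfl⟩, ?_, ?_⟩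
      · linear_combination h1
      · linear_combination h2
    · rintro ⟨_, ⟨a, b, rfl⟩, _, ⟨c, d, rfl⟩, h1, h2⟩
      refine ⟨a, b, c, d, ?_, ?_⟩
      · linear_combination h1
      · linear_combination h2
  · intro γ _ γ' _ δ _ δ' _ h
    simp only [Prod.smul_mk, Prod.mk_add_mk, Prod.mk.injEq, smul_eq_mul] at h
    obtain ⟨h1, h2⟩ := h
    have hd : δ = δ' := by linear_combination h2
    exact ⟨by linear_combination h1 - ζ * hd, hd⟩
end
end

section
/- In the group of permutations of {1,…,16}, the subgroup generated by p₂, p₃ and s is isomorphic to GL(2, ℤ/3ℤ). -/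
/-- The permutation p₂ = (1 13 7 12)(2 9 14 16)(3 5 15 6)(4 11 8 10) of {1,…,16},
written 0-indexed on `Fin 16`. -/
def p2 : Equiv.Perm (Fin 16) :=
  ⟨![12, 8, 4, 10, 14, 2, 11, 9, 13, 3, 7, 0, 6, 15, 5, 1],
   ![11, 15, 5, 9, 2, 14, 12, 10, 1, 7, 3, 6, 0, 8, 4, 13],
   by decide, by decide⟩

/-- The permutation p₃ = (1 13 5 7 12 6)(2 4 11 14 8 10)(3 15)(9 16) of {1,…,16},
written 0-indexed on `Fin 16`. -/
def p3 : Equiv.Perm (Fin 16) :=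
  ⟨![12, 3, 14, 10, 6, 0, 11, 9, 15, 1, 13, 5, 4, 7, 2, 8],
   ![5, 9, 14, 1, 12, 11, 4, 13, 15, 7, 3, 6, 0, 10, 2, 8],
   by decide, by decide⟩

/-- The permutation s = (1 14)(2 7)(3 16)(4 5)(6 8)(9 15)(10 12)(11 13) of {1,…,16},
written 0-indexed on `Fin 16`. -/
def sPerm : Equiv.Perm (Fin 16) :=
  ⟨![13, 6, 15, 4, 3, 7, 1, 5, 14, 11, 12, 9, 10, 0, 8, 2],
   ![13, 6, 15, 4, 3, 7, 1, 5, 14, 11, 12, 9, 10, 0, 8, 2],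
   by decide, by decide⟩

/-- The sixteen points as pairs (nonzero vector, determinant sign) over ℤ/3ℤ. -/
def enc : Fin 16 → ZMod 3 × ZMod 3 × ZMod 3 :=
  ![(1, 0, 1), (2, 2, 2), (1, 2, 1), (2, 0, 2), (2, 2, 1), (1, 1, 1), (2, 0, 1), (1, 0, 2),
    (2, 1, 2), (0, 2, 2), (0, 1, 2), (0, 1, 1), (0, 2, 1), (1, 1, 2), (2, 1, 1), (1, 2, 2)]

/-- The left inverse of `enc`. -/
def dec (v : ZMod 3 × ZMod 3 × ZMod 3) : Fin 16 :=
  (![![![0, 0, 0], ![0, 11, 10], ![0, 12, 9]], ![![0, 0, 7], ![0, 5, 13], ![0, 2, 15]],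
    ![![0, 6, 3], ![0, 14, 8], ![0, 4, 1]]] : Fin 3 → Fin 3 → Fin 3 → Fin 16) v.1 v.2.1 v.2.2

/-- The action of a matrix with entries a, b, c, d on vector-sign pairs. -/
def act (a b c d : ZMod 3) (v : ZMod 3 × ZMod 3 × ZMod 3) : ZMod 3 × ZMod 3 × ZMod 3 :=
  (a * v.1 + b * v.2.1, c * v.1 + d * v.2.1, (a * d - b * c) * v.2.2)

lemma dec_enc : ∀ i, dec (enc i) = i := by decide

lemma enc_dec_act : ∀ a b c d : ZMod 3, a * d - b * c ≠ 0 → ∀ i,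
    enc (dec (act a b c d (enc i))) = act a b c d (enc i) := by decide +kernel

lemma act_faithful : ∀ a b c d : ZMod 3, a * d - b * c ≠ 0 →
    (∀ i, dec (act a b c d (enc i)) = i) → a = 1 ∧ b = 0 ∧ c = 0 ∧ d = 1 := by decide +kernel

abbrev GL23 := Matrix.GeneralLinearGroup (Fin 2) (ZMod 3)

lemma det_ne (M : GL23) : M 0 0 * M 1 1 - M 0 1 * M 1 0 ≠ 0 := by
  have := (Matrix.isUnit_iff_isUnit_det _).1 M.isUnit
  rw [Matrix.det_fin_two] at this
  intro h
  rw [h] at this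
  exact absurd this (by decide)

instance actInst : MulAction GL23 (Fin 16) where
  smul M i := dec (act (M 0 0) (M 0 1) (M 1 0) (M 1 1) (enc i))
  one_smul i := by
    change dec (act _ _ _ _ (enc i)) = i
    simp [act, dec_enc]
  mul_smul M N i := by
    change dec (act _ _ _ _ (enc i)) = dec (act _ _ _ _ (enc (dec (act _ _ _ _ (enc i)))))
    rw [enc_dec_act _ _ _ _ (det_ne N)]
    congr 1
    simp only [act, Units.val_mul, Matrix.mul_apply, Fin.sum_univ_two, Prod.mk.injEq]
    refine ⟨?_, ?_, ?_⟩ <;> ring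

lemma smul_eq (M : GL23) (i : Fin 16) :
    M • i = dec (act (M 0 0) (M 0 1) (M 1 0) (M 1 1) (enc i)) := rfl

def mA : GL23 := ⟨!![0, 1; 2, 0], !![0, 2; 1, 0], by decide, by decide⟩
def mB : GL23 := ⟨!![0, 1; 2, 1], !![1, 2; 1, 0], by decide, by decide⟩
def mC : GL23 := ⟨!![1, 0; 1, 2], !![1, 0; 1, 2], by decide, by decide⟩

def phi : GL23 →* Equiv.Perm (Fin 16) := MulAction.toPermHom GL23 (Fin 16)

lemma phi_inj : Function.Injective phi := by
  rw [injective_iff_map_eq_one]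
  intro M h
  obtain ⟨h1, h2, h3, h4⟩ := act_faithful _ _ _ _ (det_ne M)
    (fun i => congrArg (fun f : Equiv.Perm (Fin 16) => f i) h)
  ext i j
  fin_cases i <;> fin_cases j <;> simp [h1, h2, h3, h4]

lemma phi_A : phi mA = p2 := by
  ext i; revert i; decide +kernel
lemma phi_B : phi mB = p3 := by
  ext i; revert i; decide +kernel
lemma phi_C : phi mC = sPerm := by
  ext i; revert i; decide +kernel

lemma words : ∀ a b c d : ZMod 3, a * d - b * c ≠ 0 →
    ∃ (l : Fin 2) (i : Fin 6) (j : Fin 4) (k : Fin 6),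
      !![a, b; c, d] = mB.val ^ i.val * mA.val ^ j.val * mB.val ^ k.val * mC.val ^ l.val := by
  decide +kernel

lemma gen : Subgroup.closure {mA, mB, mC} = ⊤ := by
  rw [eq_top_iff]
  intro M _
  obtain ⟨l, i, j, k, h⟩ := words _ _ _ _ (det_ne M)
  have : M = mB ^ i.val * mA ^ j.val * mB ^ k.val * mC ^ l.val := by
    apply Units.ext
    push_cast
    rw [← h]
    exact Matrix.eta_fin_two _
  rw [this]
  have hA : mA ∈ Subgroup.closure {mA, mB, mC} := Subgroup.subset_closure (by simp)
  have hB : mB ∈ Subgroup.closure {mA, mB, mC} := Subgroup.subset_closure (by simp)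
  have hC : mC ∈ Subgroup.closure {mA, mB, mC} := Subgroup.subset_closure (by simp)
  exact mul_mem (mul_mem (mul_mem (pow_mem hB _) (pow_mem hA _)) (pow_mem hB _)) (pow_mem hC _)

lemma range_eq : phi.range = Subgroup.closure {p2, p3, sPerm} := by
  rw [MonoidHom.range_eq_map, ← gen, MonoidHom.map_closure]
  simp [Set.image_insert_eq, phi_A, phi_B, phi_C]

/-- The subgroup generated by p₂, p₃ and s is isomorphic to GL(2, ℤ/3ℤ). -/
theorem stmt15 :
    Nonempty ((Subgroup.closure {p2, p3, sPerm}) ≃*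
      Matrix.GeneralLinearGroup (Fin 2) (ZMod 3)) := by
  exact ⟨((MonoidHom.ofInjective phi_inj).trans
    (MulEquiv.subgroupCongr range_eq)).symm⟩
end
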